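/- The invariant I_4 is the following explicit quadratic polynomial in the split Casimir element: I_4 = 1024(r−1)^2·Ĉ^2 + 256(r−1)^2·Ĉ − 4r(2r−1)·I_0 in Cl ⊗ Cl. -/

import Mathlib

open scoped TensorProduct

noncomputable section

/-- The quadratic form `x₁² + ⋯ + x_{2r}²` on `ℂ^{2r}`. -/
def Qf (r : ℕ) : QuadraticForm ℂ (Fin (2*r) → ℂ) :=
  QuadraticMap.weightedSumSquares ℂ (fun _ : Fin (2*r) => (1:ℂ))

/-- The Clifford algebra of `Qf r`. -/
abbrev Cl (r : ℕ) := CliffordAlgebra (Qf r)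

/-- The generators `Γ_i`. -/
def Γgen (r : ℕ) (i : Fin (2*r)) : Cl r :=
  CliffordAlgebra.ι (Qf r) (Pi.single i 1)

/-- The antisymmetrised products `Γ_{[i₁…i_k]}`. -/
def Γbr (r k : ℕ) (i : Fin k → Fin (2*r)) : Cl r :=
  ((k.factorial : ℂ))⁻¹ •
    ∑ σ : Equiv.Perm (Fin k),
      ((Equiv.Perm.sign σ : ℤ) : ℂ) • (List.ofFn fun j => Γgen r (i (σ j))).prod

/-- The invariants `I_k ∈ Cl ⊗ Cl`. -/
def Ik (r k : ℕ) : Cl r ⊗[ℂ] Cl r :=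
  ∑ i : Fin k → Fin (2*r), (Γbr r k i) ⊗ₜ[ℂ] (Γbr r k i)

/-- The split Casimir element `Ĉ = −I₂/(16(2r−2))`. -/
def sC (r : ℕ) : Cl r ⊗[ℂ] Cl r := (-(16*(2*(r:ℂ)-2))⁻¹) • Ik r 2

/-- The top element `Γ_{2r+1} = (−i)^r Γ₁⋯Γ_{2r}`. -/
def Γtop (r : ℕ) : Cl r :=
  ((-Complex.I)^r) • (List.ofFn fun i : Fin (2*r) => Γgen r i).prod

/-- The chirality projector `p_ε = (1 + ε Γ_{2r+1})/2`. -/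
def pCh (r : ℕ) (ε : ℂ) : Cl r := (2:ℂ)⁻¹ • (1 + ε • Γtop r)

/-- The chirality projectors `p_{εε'} = p_ε ⊗ p_{ε'}`. -/
def ppCh (r : ℕ) (ε ε' : ℂ) : Cl r ⊗[ℂ] Cl r := (pCh r ε) ⊗ₜ[ℂ] (pCh r ε')

/-- The eigenvalues `c_k = (2k(2r−k) − r(2r−1))/(16(r−1))`. -/
def cEv (r k : ℕ) : ℂ :=
  (2*(k:ℂ)*(2*(r:ℂ)-(k:ℂ)) - (r:ℂ)*(2*(r:ℂ)-1)) / (16*((r:ℂ)-1))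

/-- The spectral projectors `P_k = Π_{j≠k} (Ĉ − c_j)/(c_k − c_j)`. -/
def Pk (r k : ℕ) : Cl r ⊗[ℂ] Cl r :=
  (((List.range (r+1)).filter (fun j => j ≠ k)).map
    (fun j => (cEv r k - cEv r j)⁻¹ • (sC r - cEv r j • 1))).prod

/-- `P_r^S = (p_{++} + p_{−−})·P_r`. -/
def PrS (r : ℕ) : Cl r ⊗[ℂ] Cl r := (ppCh r 1 1 + ppCh r (-1) (-1)) * Pk r r

/-- The ascending factorial `a_k(u) = (u/2)(u/2+1)⋯(u/2+k−1)`. -/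
def asc (u : ℂ) (k : ℕ) : ℂ := ∏ j ∈ Finset.range k, (u/2 + (j:ℂ))

/-!
The elements `u_i = Γ_i ⊗ Γ_i` commute and square to `1`, since the signs from the two tensor
factors cancel. As `Γ_{[i₁…i_k]}` is `Γ_{i₁}⋯Γ_{i_k}` for distinct indices and vanishes otherwise,
`I_k` is the sum of `u_{i₁}⋯u_{i_k}` over all tuples of distinct indices, that is, `k!` times an
elementary symmetric polynomial in the `u_i`. Multiplying `I_{k+1}` by `I_1 = ∑ u_a`, a factor `u_a`
either extends a tuple or cancels one of its entries, whence
`I_{k+2} = I_1 I_{k+1} - (k+1)(2r-k) I_k`. Eliminating `I_1` and `I_3` leaves `I_4` as a quadratic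
polynomial in `I_2`.
-/

section AnticommutingProducts

theorem prod_ofFn_comp_swap_of_anticomm {M : Type*} [Monoid M] [HasDistribNeg M] {n : ℕ}
    (f : Fin (n + 1) → M) (hf : ∀ i j, i ≠ j → f i * f j = -(f j * f i)) (j : Fin n) :
    (List.ofFn (f ∘ Equiv.swap j.castSucc j.succ)).prod = -(List.ofFn f).prod := by
  induction n with
  | zero => exact j.elim0
  | succ n ih =>
    cases j using Fin.cases with
    | zero =>
      have fixes_tail (i : Fin n) : Equiv.swap (0 : Fin (n + 2)) 1 i.succ.succ = i.succ.succ :=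
        Equiv.swap_apply_of_ne_of_ne (by simp) (by simp [Fin.ext_iff])
      have h01 : (0 : Fin (n + 2)) ≠ 1 := by simp
      simp [List.ofFn_succ, fixes_tail, ← mul_assoc, hf 1 0 h01.symm]
    | succ j =>
      have fixes_head : Equiv.swap j.succ.castSucc j.succ.succ 0 = 0 :=
        Equiv.swap_apply_of_ne_of_ne (by simp [Fin.ext_iff]) (by simp [Fin.ext_iff])
      have swaps_tail (l : Fin (n + 1)) : Equiv.swap j.succ.castSucc j.succ.succ l.succ =
          (Equiv.swap j.castSucc j.succ l).succ :=
        (Fin.succ_injective _).swap_apply j.castSucc j.succ l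
      have tail_prod := ih (fun l => f l.succ) (fun a b hab => hf _ _ (by simpa using hab)) j
      rw [List.ofFn_succ, List.ofFn_succ (f := f), List.prod_cons, List.prod_cons]
      simp only [Function.comp_def] at tail_prod ⊢
      simp only [fixes_head, swaps_tail, tail_prod, mul_neg]

theorem prod_ofFn_comp_perm_of_anticomm {A : Type*} [Ring A] {n : ℕ} (f : Fin n → A)
    (hf : ∀ i j, i ≠ j → f i * f j = -(f j * f i)) (σ : Equiv.Perm (Fin n)) :
    (List.ofFn (f ∘ σ)).prod = Equiv.Perm.sign σ • (List.ofFn f).prod := by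
  cases n with
  | zero => simp [Subsingleton.elim σ 1]
  | succ n =>
    have hσ : σ ∈ Submonoid.closure (Set.range fun i : Fin n => Equiv.swap i.castSucc i.succ) :=
      Equiv.Perm.mclosure_swap_castSucc_succ n ▸ Submonoid.mem_top σ
    induction hσ using Submonoid.closure_induction_right with
    | one => simp
    | mul_right τ _ s hs ih =>
      obtain ⟨j, rfl⟩ := hs
      rw [Equiv.Perm.coe_mul, ← Function.comp_assoc, prod_ofFn_comp_swap_of_anticomm (f ∘ τ)
        (fun a b hab => hf _ _ (τ.injective.ne hab)) j, ih]
      simp [Equiv.Perm.sign_swap Fin.castSucc_lt_succ.ne]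

theorem commute_tmul_self_of_anticomm {R A : Type*} [CommRing R] [Ring A] [Algebra R A] {a b : A}
    (h : a * b = -(b * a)) : Commute (a ⊗ₜ[R] a) (b ⊗ₜ[R] b) := by
  simp [Commute, SemiconjBy, h, TensorProduct.neg_tmul, TensorProduct.tmul_neg]

end AnticommutingProducts

theorem prod_ofFn_tmul_prod_ofFn {R A B : Type*} [CommSemiring R] [Semiring A] [Algebra R A]
    [Semiring B] [Algebra R B] {k : ℕ} (f : Fin k → A) (g : Fin k → B) :
    (List.ofFn f).prod ⊗ₜ[R] (List.ofFn g).prod = (List.ofFn fun j => f j ⊗ₜ[R] g j).prod := by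
  induction k with
  | zero => simp [Algebra.TensorProduct.one_def]
  | succ k ih => simp [List.ofFn_succ, ← ih]

theorem prod_ofFn_comp_perm_of_commute {M : Type*} [Monoid M] {n : ℕ} {f : Fin n → M}
    (hf : ∀ i j, Commute (f i) (f j)) (σ : Equiv.Perm (Fin n)) :
    (List.ofFn (f ∘ σ)).prod = (List.ofFn f).prod :=
  (σ.ofFn_comp_perm f).prod_eq' (List.pairwise_ofFn.2 fun _ _ _ => hf _ _)

section SumsOverEmbeddings

variable {α ι : Type*} [Fintype α] [Fintype ι]

theorem sum_notMem_range_embedding [DecidableEq ι] {M : Type*} [AddCommGroup M] (e : α ↪ ι)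
    (f : ι → M) :
    ∑ a : {a // a ∉ Set.range e}, f a = ∑ a, f a - ∑ j, f (e j) := by
  have sum_range : ∑ a : {a // a ∈ Set.range e}, f a = ∑ j, f (e j) :=
    ((Equiv.ofInjective e e.injective).sum_comp fun a => f a).symm
  rw [eq_sub_iff_add_eq', ← sum_range]
  convert Fintype.sum_subtype_add_sum_subtype (· ∈ Set.range e) f

theorem sum_embedding_fin_succ [DecidableEq ι] {M : Type*} [AddCommMonoid M] {k : ℕ}
    (F : ι → (Fin k → ι) → M) :
    ∑ e : Fin (k + 1) ↪ ι, F (e 0) (e ∘ Fin.succ) =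
      ∑ e : Fin k ↪ ι, ∑ a : {a // a ∉ Set.range e}, F a e := by
  rw [← Fintype.sum_sigma' fun (e : Fin k ↪ ι) (a : {a // a ∉ Set.range e}) => F a e,
    ← (Equiv.embeddingFinSucc k ι).sum_comp]
  rfl

theorem sum_eq_sum_embedding [DecidableEq α] {M : Type*} [AddCommMonoid M] (F : (α → ι) → M)
    (hF : ∀ i, ¬ Function.Injective i → F i = 0) : ∑ i, F i = ∑ e : α ↪ ι, F e :=
  (Fintype.sum_of_injective (fun e : α ↪ ι => ⇑e) DFunLike.coe_injective _ _
    (fun i hi => hF i fun h => hi ⟨⟨i, h⟩, rfl⟩) fun _ => rfl).symm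

end SumsOverEmbeddings

section OrderedESymm

variable {ι : Type*} [Fintype ι]

/-- `k!` times the `k`-th elementary symmetric polynomial in the family `u`, written as a sum over
ordered `k`-tuples of distinct indices so that it makes sense in a noncommutative ring. -/
def orderedESymm {B : Type*} [Semiring B] (u : ι → B) (k : ℕ) : B :=
  ∑ e : Fin k ↪ ι, (List.ofFn (u ∘ e)).prod

theorem orderedESymm_zero {B : Type*} [Semiring B] (u : ι → B) : orderedESymm u 0 = 1 := by
  simp [orderedESymm]

theorem orderedESymm_one {B : Type*} [Semiring B] (u : ι → B) : orderedESymm u 1 = ∑ a, u a :=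
  Fintype.sum_equiv Equiv.uniqueEmbeddingEquivResult _ _ fun e => by
    simp [Equiv.uniqueEmbeddingEquivResult]

variable {B : Type*} [Ring B]

theorem orderedESymm_succ (u : ι → B) (k : ℕ) :
    orderedESymm u (k + 1) =
      ∑ e : Fin k ↪ ι, (∑ a, u a - ∑ j, u (e j)) * (List.ofFn (u ∘ e)).prod := by
  classical
  simp_rw [← sum_notMem_range_embedding, Finset.sum_mul]
  rw [← sum_embedding_fin_succ fun a i => u a * (List.ofFn (u ∘ i)).prod]
  simp [orderedESymm, List.ofFn_succ, Function.comp_def]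

variable {u : ι → B}

theorem sum_embedding_mul_prod_ofFn (hcomm : ∀ i j, Commute (u i) (u j))
    (hsq : ∀ i, u i * u i = 1) {k : ℕ} (j : Fin (k + 1)) :
    ∑ e : Fin (k + 1) ↪ ι, u (e j) * (List.ofFn (u ∘ e)).prod =
      (Fintype.card ι - k) * orderedESymm u k := by
  classical
  calc ∑ e : Fin (k + 1) ↪ ι, u (e j) * (List.ofFn (u ∘ e)).prod
    _ = ∑ e : Fin (k + 1) ↪ ι, u (e 0) * (List.ofFn (u ∘ e)).prod := by
      refine Fintype.sum_equiv ((Equiv.swap 0 j).embeddingCongr (Equiv.refl ι)) _ _ fun e => ?_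
      have swapped : ⇑((Equiv.swap 0 j).embeddingCongr (Equiv.refl ι) e) = e ∘ Equiv.swap 0 j := rfl
      rw [swapped, Function.comp_apply, Equiv.swap_apply_left, ← Function.comp_assoc,
        prod_ofFn_comp_perm_of_commute (f := u ∘ e) fun _ _ => hcomm _ _]
    _ = ∑ e : Fin (k + 1) ↪ ι, (List.ofFn (u ∘ e ∘ Fin.succ)).prod := by
      simp [List.ofFn_succ, ← mul_assoc, hsq, Function.comp_def]
    _ = ∑ e : Fin k ↪ ι, ∑ _a : {a // a ∉ Set.range e}, (List.ofFn (u ∘ e)).prod :=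
      sum_embedding_fin_succ fun _ i => (List.ofFn (u ∘ i)).prod
    _ = (Fintype.card ι - k) * orderedESymm u k := by
      have sum_const_notMem_range (e : Fin k ↪ ι) (b : B) :
          ∑ _a : {a // a ∉ Set.range e}, b = (Fintype.card ι - k) * b := by
        rw [sum_notMem_range_embedding e fun _ => b]
        simp [sub_mul]
      simp only [sum_const_notMem_range, orderedESymm, Finset.mul_sum]

theorem orderedESymm_add_two (hcomm : ∀ i j, Commute (u i) (u j)) (hsq : ∀ i, u i * u i = 1)
    (k : ℕ) :
    orderedESymm u (k + 2) = orderedESymm u 1 * orderedESymm u (k + 1) -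
      (k + 1) * ((Fintype.card ι - k) * orderedESymm u k) := by
  have sum_repeated : ∑ e : Fin (k + 1) ↪ ι, (∑ j, u (e j)) * (List.ofFn (u ∘ e)).prod =
      (k + 1) * ((Fintype.card ι - k) * orderedESymm u k) := by
    simp_rw [Finset.sum_mul]
    rw [Finset.sum_comm]
    simp only [sum_embedding_mul_prod_ofFn hcomm hsq]
    simp
  rw [orderedESymm_succ, ← sum_repeated, orderedESymm_one, orderedESymm, Finset.mul_sum,
    ← Finset.sum_sub_distrib]
  simp only [sub_mul]

end OrderedESymm

section Gamma

variable (r : ℕ)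

theorem Qf_single (i : Fin (2 * r)) : Qf r (Pi.single i 1) = 1 := by
  simp [Qf, QuadraticMap.weightedSumSquares_apply, Pi.single_apply]

theorem Γgen_mul_self (i : Fin (2 * r)) : Γgen r i * Γgen r i = 1 := by
  rw [Γgen, CliffordAlgebra.ι_sq_scalar, Qf_single, map_one]

variable {r} in
theorem isOrtho_Qf_single {i j : Fin (2 * r)} (h : i ≠ j) :
    (Qf r).IsOrtho (Pi.single i 1) (Pi.single j 1) := by
  simp only [QuadraticMap.isOrtho_def, Qf, QuadraticMap.weightedSumSquares_apply, one_smul,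
    ← Finset.sum_add_distrib]
  refine Finset.sum_congr rfl fun l _ => ?_
  obtain rfl | hl := eq_or_ne l i
  · simp [h]
  · simp [hl]

variable {r} in
theorem Γgen_anticomm {i j : Fin (2 * r)} (h : i ≠ j) :
    Γgen r i * Γgen r j = -(Γgen r j * Γgen r i) :=
  CliffordAlgebra.ι_mul_ι_comm_of_isOrtho (isOrtho_Qf_single h)

theorem Γbr_eq_alternatization {k : ℕ} (i : Fin k → Fin (2 * r)) :
    Γbr r k i = (k.factorial : ℂ)⁻¹ •
      ((MultilinearMap.mkPiAlgebraFin ℂ k (Cl r)).compLinearMap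
        fun _ => CliffordAlgebra.ι (Qf r)).alternatization fun j => Pi.single (i j) 1 := by
  simp [Γbr, Γgen, MultilinearMap.alternatization_apply, Units.smul_def, Int.cast_smul_eq_zsmul]

variable {r}

theorem Γbr_of_injective {k : ℕ} {i : Fin k → Fin (2 * r)} (hi : Function.Injective i) :
    Γbr r k i = (List.ofFn (Γgen r ∘ i)).prod := by
  have signed_prod (σ : Equiv.Perm (Fin k)) :
      ((Equiv.Perm.sign σ : ℤ) : ℂ) • (List.ofFn fun j => Γgen r (i (σ j))).prod =
        (List.ofFn (Γgen r ∘ i)).prod := by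
    have h := prod_ofFn_comp_perm_of_anticomm (Γgen r ∘ i)
      (fun a b hab => Γgen_anticomm (hi.ne hab)) σ
    simp only [Function.comp_def] at h ⊢
    rw [h, Int.cast_smul_eq_zsmul, ← Units.smul_def, smul_smul, Int.units_mul_self, one_smul]
  have hk : (k.factorial : ℂ) ≠ 0 := Nat.cast_ne_zero.2 k.factorial_ne_zero
  simp only [Γbr, signed_prod]
  simp [Fintype.card_perm, ← Nat.cast_smul_eq_nsmul ℂ, smul_smul, hk]

theorem Γbr_of_not_injective {k : ℕ} {i : Fin k → Fin (2 * r)}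
    (hi : ¬ Function.Injective i) : Γbr r k i = 0 := by
  rw [Γbr_eq_alternatization, AlternatingMap.map_eq_zero_of_not_injective, smul_zero]
  exact fun h => hi (Function.Injective.of_comp (f := fun l => Pi.single l (1 : ℂ)) h)

variable (r)

/-- The elements `Γ_i ⊗ Γ_i`: commuting involutions of which each `I_k` is a symmetric
polynomial. -/
def Γdiag (i : Fin (2 * r)) : Cl r ⊗[ℂ] Cl r := Γgen r i ⊗ₜ[ℂ] Γgen r i

theorem Γdiag_mul_self (i : Fin (2 * r)) : Γdiag r i * Γdiag r i = 1 := by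
  simp [Γdiag, Γgen_mul_self, Algebra.TensorProduct.one_def]

theorem Γdiag_commute (i j : Fin (2 * r)) : Commute (Γdiag r i) (Γdiag r j) := by
  rcases eq_or_ne i j with rfl | h
  · exact Commute.refl _
  · exact commute_tmul_self_of_anticomm (Γgen_anticomm h)

theorem Ik_eq_orderedESymm (k : ℕ) : Ik r k = orderedESymm (Γdiag r) k := by
  rw [Ik, sum_eq_sum_embedding _ fun i hi => by simp [Γbr_of_not_injective hi]]
  refine Finset.sum_congr rfl fun e _ => ?_
  rw [Γbr_of_injective e.injective, prod_ofFn_tmul_prod_ofFn]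
  rfl

theorem Ik_zero : Ik r 0 = 1 := by
  rw [Ik_eq_orderedESymm, orderedESymm_zero]

theorem Ik_add_two (k : ℕ) :
    Ik r (k + 2) = Ik r 1 * Ik r (k + 1) - ((k + 1) * (2 * r - k) : ℂ) • Ik r k := by
  simp_rw [Ik_eq_orderedESymm]
  rw [orderedESymm_add_two (Γdiag_commute r) (Γdiag_mul_self r),
    Algebra.smul_def, ← mul_assoc]
  simp only [map_mul, map_sub, map_add, map_natCast, map_ofNat, map_one, Fintype.card_fin,
    Nat.cast_mul, Nat.cast_ofNat]

theorem Ik_four : Ik r 4 =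
    Ik r 2 ^ 2 - (8 * (r - 1) : ℂ) • Ik r 2 - (4 * r * (2 * r - 1) : ℂ) • Ik r 0 := by
  have I₂ : Ik r 2 = Ik r 1 * Ik r 1 - (2 * r : ℂ) • Ik r 0 := by
    simpa using Ik_add_two r 0
  have I₃ : Ik r 3 = Ik r 1 * Ik r 2 - (2 * (2 * r - 1) : ℂ) • Ik r 1 := by
    simpa [one_add_one_eq_two] using Ik_add_two r 1
  have I₄ : Ik r 4 = Ik r 1 * Ik r 3 - (3 * (2 * r - 2) : ℂ) • Ik r 2 := by
    simpa [two_add_one_eq_three] using Ik_add_two r 2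
  rw [I₄, I₃, I₂, Ik_zero]
  simp only [sq, mul_sub, sub_mul, mul_smul_comm, smul_mul_assoc, mul_assoc, mul_one, one_mul]
  module

variable {r} in
theorem Ik_two_eq_smul_sC (hr : r ≠ 1) : Ik r 2 = (-(32 * (r - 1)) : ℂ) • sC r := by
  have h : (r : ℂ) - 1 ≠ 0 := sub_ne_zero.2 (Nat.cast_ne_one.2 hr)
  have hc : -(32 * ((r : ℂ) - 1)) * -(16 * (2 * (r : ℂ) - 2))⁻¹ = 1 := by
    rw [← mul_sub_one]
    field_simp
    norm_num
  rw [sC, smul_smul, hc, one_smul]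

end Gamma

/-- `I₄ = 1024(r−1)²·Ĉ² + 256(r−1)²·Ĉ − 4r(2r−1)·I₀`. -/
theorem I4_eq_poly_sC (r : ℕ) (hr : 2 ≤ r) :
    Ik r 4
      = ((1024:ℂ)*((r:ℂ)-1)^2) • (sC r)^2
        + ((256:ℂ)*((r:ℂ)-1)^2) • sC r
        - ((4:ℂ)*(r:ℂ)*(2*(r:ℂ)-1)) • Ik r 0 := by
  rw [Ik_four, Ik_two_eq_smul_sC (by omega), smul_pow]
  module

end
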